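/- If A = KQ/J² is a radical square zero algebra, then the trivial extension A ⋉ D(A) is a symmetric special multiserial algebra whose radical cube is zero, and A is a quotient of A ⋉ D(A). -/

import Mathlib

/-!  A model of the path algebra `KQ` of a finite quiver `Q` (vertex set `V`,
arrow set `A`, source and target maps `s t : A → V`), as the quotient of the
free algebra on `V ⊕ A` by the usual path-algebra relations.  -/

open FreeAlgebra

inductive PathRel (K V A : Type) [Field K] [Fintype V] [DecidableEq V] (s t : A → V) :
    FreeAlgebra K (V ⊕ A) → FreeAlgebra K (V ⊕ A) → Prop
  | vtxMul : ∀ v w : V,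
      PathRel K V A s t (ι K (Sum.inl v) * ι K (Sum.inl w))
        (if v = w then ι K (Sum.inl v) else 0)
  | unit : PathRel K V A s t (∑ v : V, ι K (Sum.inl v)) 1
  | src : ∀ a : A,
      PathRel K V A s t (ι K (Sum.inl (s a)) * ι K (Sum.inr a)) (ι K (Sum.inr a))
  | tgt : ∀ a : A,
      PathRel K V A s t (ι K (Sum.inr a) * ι K (Sum.inl (t a))) (ι K (Sum.inr a))

/-- The path algebra `KQ`. -/
abbrev PathAlg (K V A : Type) [Field K] [Fintype V] [DecidableEq V] (s t : A → V) : Type :=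
  RingQuot (PathRel K V A s t)

section

variable (K V A : Type) [Field K] [Fintype V] [DecidableEq V] (s t : A → V)

/-- The element of `KQ` corresponding to an arrow. -/
noncomputable def arrow (a : A) : PathAlg K V A s t :=
  RingQuot.mkAlgHom K (PathRel K V A s t) (ι K (Sum.inr a))

/-- The idempotent of `KQ` corresponding to a vertex (trivial path). -/
noncomputable def vtx (v : V) : PathAlg K V A s t :=
  RingQuot.mkAlgHom K (PathRel K V A s t) (ι K (Sum.inl v))

/-- The element of `KQ` given by a path, recorded as its list of arrows. -/
noncomputable def pathElem (l : List A) : PathAlg K V A s t :=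
  (l.map (arrow K V A s t)).prod

/-- The ideal `J²`, where `J` is the arrow ideal: it is generated by the
products of two arrows (equivalently, by the paths of length 2). -/
def JSqIdeal : TwoSidedIdeal (PathAlg K V A s t) :=
  TwoSidedIdeal.span {x | ∃ a b : A, x = arrow K V A s t a * arrow K V A s t b}

/-- An ideal `I` of `KQ` is admissible if `J^N ⊆ I ⊆ J²` for some `N ≥ 2`;
`J^N ⊆ I` amounts to all paths of length `N` lying in `I`. -/
def Admissible (I : TwoSidedIdeal (PathAlg K V A s t)) : Prop :=
  ∃ N : ℕ, 2 ≤ N ∧ (∀ l : List A, l.length = N → pathElem K V A s t l ∈ I) ∧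
    I ≤ JSqIdeal K V A s t

/-- Condition (M): for every arrow `a` there is at most one arrow `b` with
`ab ∉ I` and at most one arrow `c` with `ca ∉ I`. -/
def ConditionM (I : TwoSidedIdeal (PathAlg K V A s t)) : Prop :=
  ∀ a : A,
    (∀ b b' : A, arrow K V A s t a * arrow K V A s t b ∉ I →
      arrow K V A s t a * arrow K V A s t b' ∉ I → b = b') ∧
    (∀ c c' : A, arrow K V A s t c * arrow K V A s t a ∉ I →
      arrow K V A s t c' * arrow K V A s t a ∉ I → c = c')

/-- `σ : Q₁ → Q₁ ∪ {⋄}` (with `⋄ = none`): `σ a = some b` iff `ab ∉ I`. -/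
def SigmaSpec (I : TwoSidedIdeal (PathAlg K V A s t)) (σ : A → Option A) : Prop :=
  ∀ a b : A, σ a = some b ↔ arrow K V A s t a * arrow K V A s t b ∉ I

/-- `τ : Q₁ → Q₁ ∪ {⋄}` (with `⋄ = none`): `τ a = some c` iff `ca ∉ I`. -/
def TauSpec (I : TwoSidedIdeal (PathAlg K V A s t)) (τ : A → Option A) : Prop :=
  ∀ a c : A, τ a = some c ↔ arrow K V A s t c * arrow K V A s t a ∉ I

end

/-- Iterate of `σ` (extended to `Q₁ ∪ {⋄}` by `σ(⋄) = ⋄`) applied to an arrow: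
`OIter σ n a = σⁿ(a)`. -/
def OIter {A : Type} (σ : A → Option A) (n : ℕ) (a : A) : Option A :=
  (fun o => o.bind σ)^[n] (some a)

/-- A `(σ,τ)`-maximal path `a₁ ⋯ a_r`: `σ(aᵢ) = a_{i+1}`, `σ(a_r) = ⋄`,
`τ(a₁) = ⋄`. -/
def IsMaximalPath {A : Type} (σ τ : A → Option A) (l : List A) : Prop :=
  l ≠ [] ∧ l.Chain' (fun x y => σ x = some y) ∧
    (∀ x ∈ l.getLast?, σ x = none) ∧ (∀ x ∈ l.head?, τ x = none)

/-- The cycle `C_a = a σ(a) ⋯ σ^{m̂_a−1}(a)`, where `m̂_a` is the least positive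
integer with `σ^{m̂_a}(a) = a`:  `l` has entries the iterates of `σ` at `a` and
length the least positive return time of `a` under `σ`. -/
def IsSigmaCycleOf {A : Type} (σ : A → Option A) (a : A) (l : List A) : Prop :=
  l ≠ [] ∧ (∀ i : ℕ, i < l.length → l[i]? = OIter σ i a) ∧
    OIter σ l.length a = some a ∧
    ∀ k : ℕ, 0 < k → k < l.length → OIter σ k a ≠ some a

/-- A list of arrows is composable (i.e. a genuine path) if the target of each
arrow is the source of the next. -/
def Composable {V A : Type} (s t : A → V) (l : List A) : Prop :=
  l.Chain' (fun a b => t a = s b)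

/-- A simple cycle: a nonempty path with the same start and end vertex and no
repeated arrows. -/
def IsSimpleCycle {V A : Type} (s t : A → V) (l : List A) : Prop :=
  l ≠ [] ∧ Composable s t l ∧ (∀ x ∈ l.head?, ∀ y ∈ l.getLast?, t y = s x) ∧ l.Nodup

/-- The path `C^m` for a cycle `C`. -/
def cyclePow {A : Type} (l : List A) (m : ℕ) : List A := (List.replicate m l).flatten

/-- A defining pair `(𝒮, μ)` in the quiver `Q`: a set `𝒮` of simple cycles and
`μ : 𝒮 → ℤ_{>0}` satisfying (D0)–(D4). -/
def IsDefiningPair {V A : Type} (s t : A → V) (S : Set (List A)) (μ : List A → ℕ) : Prop :=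
  (∀ l ∈ S, IsSimpleCycle s t l) ∧
  (∀ l ∈ S, 0 < μ l) ∧
  (∀ l ∈ S, l.length = 1 → 1 < μ l) ∧
  (∀ l ∈ S, ∀ l' : List A, l.IsRotated l' → l' ∈ S) ∧
  (∀ l ∈ S, ∀ l' ∈ S, l.IsRotated l' → μ l = μ l') ∧
  (∀ a : A, ∃ l ∈ S, a ∈ l) ∧
  (∀ l ∈ S, ∀ l' ∈ S, (∃ a : A, a ∈ l ∧ a ∈ l') → l.IsRotated l')

/-- The set of relations of Types 1, 2 and 3 attached to a defining pair:
Type 1: `C^{μ(C)} − C'^{μ(C')}` for `C, C' ∈ 𝒮` cycles at the same vertex;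
Type 2: `C^{μ(C)} a` for `C ∈ 𝒮` with first arrow `a`;
Type 3: `ab` for arrows `a, b` with `ab` not a subpath of any `C^s`, `C ∈ 𝒮`. -/
def RelSet (K V A : Type) [Field K] [Fintype V] [DecidableEq V] (s t : A → V)
    (S : Set (List A)) (μ : List A → ℕ) : Set (PathAlg K V A s t) :=
  {x | ∃ l ∈ S, ∃ l' ∈ S, ∃ a ∈ l.head?, ∃ a' ∈ l'.head?, s a = s a' ∧
      x = pathElem K V A s t (cyclePow l (μ l)) - pathElem K V A s t (cyclePow l' (μ l'))} ∪
  {x | ∃ l ∈ S, ∃ a ∈ l.head?, x = pathElem K V A s t (cyclePow l (μ l) ++ [a])} ∪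
  {x | ∃ a b : A, x = arrow K V A s t a * arrow K V A s t b ∧
      ∀ l ∈ S, ∀ m : ℕ, ¬ [a, b] <:+: cyclePow l m}

/-- The ideal of relations of a defining pair. -/
def DefIdeal (K V A : Type) [Field K] [Fintype V] [DecidableEq V] (s t : A → V)
    (S : Set (List A)) (μ : List A → ℕ) : TwoSidedIdeal (PathAlg K V A s t) :=
  TwoSidedIdeal.span (RelSet K V A s t S μ)

/-- The relation whose `RingQuot` is the algebra `KQ/I` defined by a defining
pair, `I` generated by the Type 1, 2, 3 relations. -/
def QRel (K V A : Type) [Field K] [Fintype V] [DecidableEq V] (s t : A → V)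
    (S : Set (List A)) (μ : List A → ℕ) :
    PathAlg K V A s t → PathAlg K V A s t → Prop :=
  fun x y => x ∈ RelSet K V A s t S μ ∧ y = 0

/-- The radical square zero algebra `A = KQ/J²`. -/
abbrev RadSqAlg (K V A : Type) [Field K] [Fintype V] [DecidableEq V] (s t : A → V) : Type :=
  RingQuot (fun x y : PathAlg K V A s t =>
    (∃ a b : A, x = arrow K V A s t a * arrow K V A s t b) ∧ y = 0)

/-! The `K`-dual `D(A) = Hom_K(A, K)` of `A = KQ/J²` as an `A`-`A`-bimodule:
`(r • f)(x) = f(x r)` and `(op b • f)(x) = f(b x)`. -/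

section Dual

variable {K V A : Type} [Field K] [Fintype V] [DecidableEq V] {s t : A → V}

noncomputable instance dualLeftSMul :
    SMul (RadSqAlg K V A s t) (Module.Dual K (RadSqAlg K V A s t)) :=
  ⟨fun r f => f ∘ₗ LinearMap.mulRight K r⟩

noncomputable instance dualLeftModule :
    Module (RadSqAlg K V A s t) (Module.Dual K (RadSqAlg K V A s t)) where
  smul := (· • ·)
  one_smul f := by ext x; show f (x * 1) = f x; rw [mul_one]
  mul_smul r r' f := by ext x; show f (x * (r * r')) = f (x * r * r'); rw [mul_assoc]
  smul_zero r := by ext x; rfl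
  smul_add r f g := by ext x; rfl
  add_smul r r' f := by
    ext x; show f (x * (r + r')) = f (x * r) + f (x * r'); rw [mul_add, map_add]
  zero_smul f := by ext x; show f (x * 0) = 0; rw [mul_zero, map_zero]

noncomputable instance dualRightSMul :
    SMul (RadSqAlg K V A s t)ᵐᵒᵖ (Module.Dual K (RadSqAlg K V A s t)) :=
  ⟨fun b f => f ∘ₗ LinearMap.mulLeft K b.unop⟩

noncomputable instance dualRightModule :
    Module (RadSqAlg K V A s t)ᵐᵒᵖ (Module.Dual K (RadSqAlg K V A s t)) where
  smul := (· • ·)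
  one_smul f := by ext x; show f (1 * x) = f x; rw [one_mul]
  mul_smul b b' f := by
    ext x
    show f ((MulOpposite.unop b' * MulOpposite.unop b) * x) =
      f (MulOpposite.unop b' * (MulOpposite.unop b * x))
    rw [mul_assoc]
  smul_zero b := by ext x; rfl
  smul_add b f g := by ext x; rfl
  add_smul b b' f := by
    ext x
    show f ((MulOpposite.unop b + MulOpposite.unop b') * x) =
      f (MulOpposite.unop b * x) + f (MulOpposite.unop b' * x)
    rw [add_mul, map_add]
  zero_smul f := by ext x; show f (0 * x) = 0; rw [zero_mul, map_zero]

instance dualSMulComm :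
    SMulCommClass (RadSqAlg K V A s t) (RadSqAlg K V A s t)ᵐᵒᵖ
      (Module.Dual K (RadSqAlg K V A s t)) :=
  ⟨fun r b f => by
    ext x
    show f (MulOpposite.unop b * (x * r)) = f (MulOpposite.unop b * x * r)
    rw [mul_assoc]⟩

instance dualTowerLeft :
    IsScalarTower K (RadSqAlg K V A s t) (Module.Dual K (RadSqAlg K V A s t)) :=
  ⟨fun k r f => by
    ext x
    show f (x * k • r) = k • f (x * r)
    rw [mul_smul_comm, map_smul]⟩

instance dualTowerRight :
    IsScalarTower K (RadSqAlg K V A s t)ᵐᵒᵖ (Module.Dual K (RadSqAlg K V A s t)) :=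
  ⟨fun k b f => by
    ext x
    show f (k • MulOpposite.unop b * x) = k • f (MulOpposite.unop b * x)
    rw [smul_mul_assoc, map_smul]⟩

end Dual

/-- The trivial extension `A ⋉ D(A)`, with `D(A) = Hom_K(A, K)`. -/
abbrev TrivExt (K V A : Type) [Field K] [Fintype V] [DecidableEq V] (s t : A → V) : Type :=
  TrivSqZeroExt (RadSqAlg K V A s t) (Module.Dual K (RadSqAlg K V A s t))

/-- A `K`-algebra is special multiserial if it is isomorphic to a quotient
`KQ'/I'` of a path algebra of a finite quiver by an admissible ideal
satisfying condition (M). -/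
def IsSpecialMultiserialAlgebra (K : Type) [Field K] (B : Type) [Ring B] [Algebra K B] :
    Prop :=
  ∃ (V' A' : Type) (iV : Fintype V') (dV : DecidableEq V') (_ : Fintype A')
      (s' t' : A' → V'),
    letI := iV
    letI := dV
    ∃ I' : TwoSidedIdeal (PathAlg K V' A' s' t'),
      Admissible K V' A' s' t' I' ∧ ConditionM K V' A' s' t' I' ∧
      Nonempty (RingQuot (fun x y : PathAlg K V' A' s' t' => x - y ∈ I') ≃ₐ[K] B)

section Aux

variable {K : Type} [Field K]

section Lift
variable {V A : Type} [Fintype V] [DecidableEq V] {s t : A → V}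

/-- Universal property of the path algebra. -/
noncomputable def pathLift {C : Type} [Ring C] [Algebra K C] (E : V → C) (F : A → C)
    (h1 : ∀ v w, E v * E w = if v = w then E v else 0) (h2 : ∑ v, E v = 1)
    (h3 : ∀ a, E (s a) * F a = F a) (h4 : ∀ a, F a * E (t a) = F a) :
    PathAlg K V A s t →ₐ[K] C :=
  RingQuot.liftAlgHom K ⟨FreeAlgebra.lift K (Sum.elim E F), by
    intro x y h
    induction h with
    | vtxMul v w =>
      rw [map_mul, FreeAlgebra.lift_ι_apply, FreeAlgebra.lift_ι_apply]
      simp only [Sum.elim_inl]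
      rw [h1]
      split_ifs <;> simp
    | unit => simp [h2]
    | src a => simp [h3]
    | tgt a => simp [h4]⟩

section
variable {C : Type} [Ring C] [Algebra K C] (E : V → C) (F : A → C)
    (h1 : ∀ v w, E v * E w = if v = w then E v else 0) (h2 : ∑ v, E v = 1)
    (h3 : ∀ a, E (s a) * F a = F a) (h4 : ∀ a, F a * E (t a) = F a)

theorem pathLift_vtx (v : V) :
    pathLift (K := K) E F h1 h2 h3 h4 (vtx K V A s t v) = E v := by
  simp [pathLift, vtx]

theorem pathLift_arrow (a : A) :
    pathLift (K := K) E F h1 h2 h3 h4 (arrow K V A s t a) = F a := by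
  simp [pathLift, arrow]

end

theorem vtx_mul_vtx (v w : V) : vtx K V A s t v * vtx K V A s t w =
    if v = w then vtx K V A s t v else 0 := by
  have := RingQuot.mkAlgHom_rel K (PathRel.vtxMul (K := K) (s := s) (t := t) v w)
  rw [map_mul] at this
  unfold vtx
  rw [this]; split_ifs <;> simp

theorem sum_vtx : ∑ v, vtx K V A s t v = 1 := by
  have := RingQuot.mkAlgHom_rel K (PathRel.unit (K := K) (s := s) (t := t))
  simpa [vtx] using this

theorem vtx_mul_arrow (a : A) : vtx K V A s t (s a) * arrow K V A s t a = arrow K V A s t a := by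
  have := RingQuot.mkAlgHom_rel K (PathRel.src (K := K) (s := s) (t := t) a)
  simpa [vtx, arrow] using this

theorem arrow_mul_vtx (a : A) : arrow K V A s t a * vtx K V A s t (t a) = arrow K V A s t a := by
  have := RingQuot.mkAlgHom_rel K (PathRel.tgt (K := K) (s := s) (t := t) a)
  simpa [vtx, arrow] using this

/-- Induction principle for the path algebra. -/
theorem path_induction {P : PathAlg K V A s t → Prop}
    (hk : ∀ k : K, P (algebraMap K _ k))
    (hv : ∀ v, P (vtx K V A s t v)) (ha : ∀ a, P (arrow K V A s t a))
    (hadd : ∀ x y, P x → P y → P (x + y)) (hmul : ∀ x y, P x → P y → P (x * y))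
    (x : PathAlg K V A s t) : P x := by
  obtain ⟨y, rfl⟩ := RingQuot.mkAlgHom_surjective K (PathRel K V A s t) x
  induction y using FreeAlgebra.induction with
  | grade0 r => rw [AlgHom.commutes]; exact hk r
  | grade1 x =>
    cases x with
    | inl v => exact hv v
    | inr a => exact ha a
  | mul a b h1 h2 => rw [map_mul]; exact hmul _ _ h1 h2
  | add a b h1 h2 => rw [map_add]; exact hadd _ _ h1 h2

/-- The projection to the radical square zero algebra. -/
noncomputable def rmk : PathAlg K V A s t →ₐ[K] RadSqAlg K V A s t :=
  RingQuot.mkAlgHom K _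

theorem rmk_surj : Function.Surjective (rmk : PathAlg K V A s t →ₐ[K] RadSqAlg K V A s t) :=
  RingQuot.mkAlgHom_surjective K _

variable (K s t) in
noncomputable def re (v : V) : RadSqAlg K V A s t := rmk (vtx K V A s t v)
variable (K s t) in
noncomputable def ra (a : A) : RadSqAlg K V A s t := rmk (arrow K V A s t a)

theorem re_mul_re (v w : V) : re K s t v * re K s t w = if v = w then re K s t v else 0 := by
  unfold re; rw [← map_mul, vtx_mul_vtx]; split_ifs <;> simp
theorem sum_re : ∑ v, re K s t v = 1 := by
  unfold re; rw [← map_sum, sum_vtx, map_one]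
theorem re_mul_ra' (a : A) : re K s t (s a) * ra K s t a = ra K s t a := by
  unfold re ra; rw [← map_mul, vtx_mul_arrow]
theorem ra_mul_re' (a : A) : ra K s t a * re K s t (t a) = ra K s t a := by
  unfold re ra; rw [← map_mul, arrow_mul_vtx]
theorem re_mul_ra (v : V) (a : A) :
    re K s t v * ra K s t a = if v = s a then ra K s t a else 0 := by
  rw [← re_mul_ra' a, ← mul_assoc, re_mul_re]
  split_ifs with h
  · subst h; rfl
  · simp
theorem ra_mul_re (v : V) (a : A) :
    ra K s t a * re K s t v = if t a = v then ra K s t a else 0 := by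
  rw [← ra_mul_re' a, mul_assoc, re_mul_re]
  split_ifs with h <;> simp
theorem ra_mul_ra (a b : A) : ra K s t a * ra K s t b = 0 := by
  unfold ra; rw [← map_mul]
  unfold rmk
  rw [RingQuot.mkAlgHom_rel K (y := (0 : PathAlg K V A s t)) ⟨⟨a, b, rfl⟩, rfl⟩, map_zero]

/-- Universal property of the radical square zero algebra. -/
noncomputable def radLift {C : Type} [Ring C] [Algebra K C] (E : V → C) (F : A → C)
    (h1 : ∀ v w, E v * E w = if v = w then E v else 0) (h2 : ∑ v, E v = 1)
    (h3 : ∀ a, E (s a) * F a = F a) (h4 : ∀ a, F a * E (t a) = F a)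
    (h5 : ∀ a b, F a * F b = 0) :
    RadSqAlg K V A s t →ₐ[K] C :=
  RingQuot.liftAlgHom K ⟨pathLift E F h1 h2 h3 h4, by
    rintro x y ⟨⟨a, b, rfl⟩, rfl⟩
    rw [map_mul, pathLift_arrow, pathLift_arrow, h5, map_zero]⟩

section
variable {C : Type} [Ring C] [Algebra K C] (E : V → C) (F : A → C)
    (h1 : ∀ v w, E v * E w = if v = w then E v else 0) (h2 : ∑ v, E v = 1)
    (h3 : ∀ a, E (s a) * F a = F a) (h4 : ∀ a, F a * E (t a) = F a)
    (h5 : ∀ a b, F a * F b = 0)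

theorem radLift_re (v : V) :
    radLift (K := K) E F h1 h2 h3 h4 h5 (re K s t v) = E v := by
  simp [radLift, re, rmk, pathLift_vtx]

theorem radLift_ra (a : A) :
    radLift (K := K) E F h1 h2 h3 h4 h5 (ra K s t a) = F a := by
  simp [radLift, ra, rmk, pathLift_arrow]

end

theorem rad_induction {P : RadSqAlg K V A s t → Prop}
    (hk : ∀ k : K, P (algebraMap K _ k))
    (hv : ∀ v, P (re K s t v)) (ha : ∀ a, P (ra K s t a))
    (hadd : ∀ x y, P x → P y → P (x + y)) (hmul : ∀ x y, P x → P y → P (x * y))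
    (x : RadSqAlg K V A s t) : P x := by
  obtain ⟨y, rfl⟩ := rmk_surj x
  induction y using path_induction with
  | hk k => rw [AlgHom.commutes]; exact hk k
  | hv v => exact hv v
  | ha a => exact ha a
  | hadd x y h1 h2 => rw [map_add]; exact hadd _ _ h1 h2
  | hmul x y h1 h2 => rw [map_mul]; exact hmul _ _ h1 h2

variable (K s t) in
/-- The character at a vertex. -/
noncomputable def chi (v : V) : RadSqAlg K V A s t →ₐ[K] K :=
  radLift (fun w => if w = v then 1 else 0) (fun _ => 0)
    (by intro a b; split_ifs <;> simp_all) (by simp) (by simp) (by simp) (by simp)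

@[simp] theorem chi_re (v w : V) : chi K s t v (re K s t w) = if w = v then 1 else 0 :=
  radLift_re ..
@[simp] theorem chi_ra (v : V) (a : A) : chi K s t v (ra K s t a) = 0 :=
  radLift_ra ..

variable (K s t) in
open Classical in
/-- The triangular two-dimensional representation at an arrow. -/
noncomputable def rho (a : A) : RadSqAlg K V A s t →ₐ[K] Matrix (Fin 2) (Fin 2) K :=
  radLift (fun w => !![if w = s a then 1 else 0, 0; 0, if w = t a then 1 else 0])
    (fun b => !![0, if b = a then 1 else 0; 0, 0])
    (by intro v w
        ext i j; fin_cases i <;> fin_cases j <;> by_cases hvw : v = w <;>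
          simp [hvw, Matrix.mul_apply] <;> grind)
    (by ext i j; fin_cases i <;> fin_cases j <;> simp [Matrix.sum_apply])
    (by intro b; ext i j; fin_cases i <;> fin_cases j <;> simp [Matrix.mul_apply] <;> grind)
    (by intro b; ext i j; fin_cases i <;> fin_cases j <;> simp [Matrix.mul_apply] <;> grind)
    (by intro b c; ext i j; fin_cases i <;> fin_cases j <;> simp [Matrix.mul_apply])

theorem rho_entries (a : A) (x : RadSqAlg K V A s t) :
    rho K s t a x 0 0 = chi K s t (s a) x ∧ rho K s t a x 1 1 = chi K s t (t a) x ∧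
      rho K s t a x 1 0 = 0 := by
  induction x using rad_induction with
  | hk k => simp [Matrix.algebraMap_matrix_apply]
  | hv v => rw [rho, radLift_re]; simp
  | ha a => rw [rho, radLift_ra]; simp
  | hadd x y h1 h2 => simp [h1, h2]
  | hmul x y h1 h2 => simp [h1, h2, Matrix.mul_apply]

variable (K s t) in
/-- The coefficient functional at an arrow. -/
noncomputable def cf (a : A) : RadSqAlg K V A s t →ₗ[K] K :=
  (Matrix.entryLinearMap K K 0 1) ∘ₗ (rho K s t a).toLinearMap

theorem cf_mul (a : A) (x y : RadSqAlg K V A s t) : cf K s t a (x * y) =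
    chi K s t (s a) x * cf K s t a y + cf K s t a x * chi K s t (t a) y := by
  simp [cf, Matrix.mul_apply, rho_entries]
@[simp] theorem cf_re (a : A) (v : V) : cf K s t a (re K s t v) = 0 := by
  simp [cf, rho, radLift_re]
open Classical in
@[simp] theorem cf_ra (a b : A) : cf K s t a (ra K s t b) = if b = a then 1 else 0 := by
  simp [cf, rho, radLift_ra]

theorem rad_decomp [Fintype A] (x : RadSqAlg K V A s t) :
    x = ∑ v, chi K s t v x • re K s t v + ∑ a, cf K s t a x • ra K s t a := by
  classical
  have h1 : ∀ a, cf K s t a (1 : RadSqAlg K V A s t) = 0 := by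
    intro a; have := cf_mul a (1 : RadSqAlg K V A s t) 1; simpa using this
  induction x using rad_induction with
  | hk k => simp [Algebra.algebraMap_eq_smul_one, h1, ← Finset.smul_sum, sum_re]
  | hv v => simp
  | ha a => simp
  | hadd x y h1 h2 =>
    nth_rewrite 1 [h1, h2]
    simp only [map_add, add_smul, Finset.sum_add_distrib]; abel
  | hmul x y h1 h2 =>
    nth_rewrite 1 [h1, h2]
    simp only [map_mul, cf_mul, add_mul, mul_add, add_smul, Finset.sum_add_distrib,
      Finset.sum_mul, Finset.mul_sum, smul_mul_smul_comm, re_mul_re, re_mul_ra, ra_mul_re,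
      ra_mul_ra, smul_ite, smul_zero, Finset.sum_const_zero,
      Finset.sum_ite_eq', Finset.mem_univ, if_true, add_zero, add_assoc]
    congr 1
    rw [add_comm]
    congr 1
    rw [Finset.sum_comm]
    simp

theorem mul_ra [Fintype A] (x : RadSqAlg K V A s t) (a : A) :
    x * ra K s t a = chi K s t (s a) x • ra K s t a := by
  nth_rewrite 1 [rad_decomp x]
  simp [add_mul, Finset.sum_mul, re_mul_ra, ra_mul_ra]
theorem ra_mul [Fintype A] (x : RadSqAlg K V A s t) (a : A) :
    ra K s t a * x = chi K s t (t a) x • ra K s t a := by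
  nth_rewrite 1 [rad_decomp x]
  simp [mul_add, Finset.mul_sum, ra_mul_re, ra_mul_ra]

theorem mul_eq_zero_of_chi [Fintype A] (x y : RadSqAlg K V A s t)
    (hx : ∀ v, chi K s t v x = 0) (hy : ∀ v, chi K s t v y = 0) : x * y = 0 := by
  rw [rad_decomp x, rad_decomp y]
  simp [hx, hy, Finset.sum_mul, Finset.mul_sum, ra_mul_ra]

theorem mem_JSq_of_rmk (x : PathAlg K V A s t) (h : rmk x = 0) : x ∈ JSqIdeal K V A s t := by
  let q : PathAlg K V A s t →+* (JSqIdeal K V A s t).ringCon.Quotient :=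
    (JSqIdeal K V A s t).ringCon.mk'
  have hq : ∀ x, q x = 0 ↔ x ∈ JSqIdeal K V A s t := by
    intro x
    rw [TwoSidedIdeal.mem_iff]
    exact RingCon.eq _
  let L := RingQuot.lift (r := fun x y : PathAlg K V A s t =>
    (∃ a b : A, x = arrow K V A s t a * arrow K V A s t b) ∧ y = 0) ⟨q, by
      rintro x y ⟨h, rfl⟩
      rw [map_zero, hq]
      exact TwoSidedIdeal.subset_span h⟩
  have hL : L (rmk x) = q x := by
    have : (rmk x : RadSqAlg K V A s t) = RingQuot.mkRingHom _ x := by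
      rw [rmk, ← RingQuot.mkAlgHom_coe K]; rfl
    rw [this]; exact RingQuot.lift_mkRingHom_apply _ _ _
  rw [← hq, ← hL, h, map_zero]

end Lift

section TrivialExtension
variable {V A : Type} [Fintype V] [DecidableEq V] {s t : A → V}

theorem lsmul_apply (r : RadSqAlg K V A s t) (f : Module.Dual K (RadSqAlg K V A s t))
    (x : RadSqAlg K V A s t) : (r • f) x = f (x * r) := rfl
theorem rsmul_apply (r : RadSqAlg K V A s t) (f : Module.Dual K (RadSqAlg K V A s t))
    (x : RadSqAlg K V A s t) : (MulOpposite.op r • f) x = f (r * x) := rfl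

theorem snd_mul_apply (x y : TrivExt K V A s t) (z : RadSqAlg K V A s t) :
    (x * y).snd z = y.snd (z * x.fst) + x.snd (y.fst * z) := by
  rw [TrivSqZeroExt.snd_mul]; rfl

theorem triv_ext {x y : TrivExt K V A s t} (h : x.fst = y.fst)
    (h' : ∀ z, x.snd z = y.snd z) : x = y :=
  TrivSqZeroExt.ext h (LinearMap.ext h')

theorem triv_symmetric [Fintype A] : ∃ g : TrivExt K V A s t →ₗ[K] K,
      (∀ x y : TrivExt K V A s t, g (x * y) = g (y * x)) ∧
      (∀ L : Ideal (TrivExt K V A s t), (∀ x ∈ L, g x = 0) → L = ⊥) ∧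
      (∀ R : Submodule (TrivExt K V A s t)ᵐᵒᵖ (TrivExt K V A s t),
        (∀ x ∈ R, g x = 0) → R = ⊥) := by
  let g : TrivExt K V A s t →ₗ[K] K :=
    { toFun := fun x => x.snd 1
      map_add' := fun x y => rfl
      map_smul' := fun k x => rfl }
  have hg : ∀ x y : TrivExt K V A s t, g (x * y) = y.snd x.fst + x.snd y.fst := by
    intro x y
    change (x * y).snd 1 = _
    rw [snd_mul_apply, one_mul, mul_one]
  have hs : ∀ x y : TrivExt K V A s t, g (x * y) = g (y * x) := by
    intro x y; rw [hg, hg, add_comm]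
  have hz : ∀ x : TrivExt K V A s t, (∀ y, g (y * x) = 0) → x = 0 := by
    intro x h
    apply triv_ext
    · have hf : ∀ f : Module.Dual K (RadSqAlg K V A s t), f x.fst = 0 := by
        intro f
        have := h (TrivSqZeroExt.inr f)
        rw [hg] at this
        simpa using this
      have h1 : ∀ v, chi K s t v x.fst = 0 := fun v => hf (chi K s t v).toLinearMap
      rw [rad_decomp x.fst]
      simp [h1, hf]
    · intro z
      have := h (TrivSqZeroExt.inl z)
      rw [hg] at this
      simpa using this
  refine ⟨g, hs, ?_, ?_⟩
  · intro L hL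
    rw [eq_bot_iff]
    intro x hx
    exact hz x fun y => hL _ (L.mul_mem_left y hx)
  · intro R hR
    rw [eq_bot_iff]
    intro x hx
    refine hz x fun y => ?_
    rw [hs]
    exact hR _ (R.smul_mem (MulOpposite.op y) hx)

theorem triv_cube [Fintype A] (x y z : TrivExt K V A s t)
    (hx : ∀ v, chi K s t v x.fst = 0) (hy : ∀ v, chi K s t v y.fst = 0)
    (hz : ∀ v, chi K s t v z.fst = 0) : x * y * z = 0 := by
  apply triv_ext
  · simp [mul_eq_zero_of_chi _ _ hx hy]
  · intro w
    have h1 := mul_eq_zero_of_chi _ _ hx hy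
    have h2 : z.fst * w * x.fst = 0 := mul_eq_zero_of_chi _ _ (by simp [hz]) hx
    have h3 : y.fst * (z.fst * w) = 0 := mul_eq_zero_of_chi _ _ hy (by simp [hz])
    rw [snd_mul_apply, snd_mul_apply, TrivSqZeroExt.fst_mul, h1, h2, h3]
    simp

theorem chi_of_jacobson (x : TrivExt K V A s t)
    (hx : x ∈ (⊥ : Ideal (TrivExt K V A s t)).jacobson) (v : V) : chi K s t v x.fst = 0 := by
  by_contra h
  obtain ⟨z, hz⟩ := Ideal.mem_jacobson_iff.1 hx
    (algebraMap K _ (-(chi K s t v x.fst)⁻¹))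
  rw [Ideal.mem_bot] at hz
  have := congrArg (fun y => chi K s t v (TrivSqZeroExt.fst y)) hz
  simp [TrivSqZeroExt.algebraMap_eq_inl'] at this
  field_simp at this
  simp at this

/-- Arrows of the quiver of the trivial extension: the arrows, their reversed copies and a
loop at each isolated vertex. -/
abbrev TArr (s t : A → V) : Type := A ⊕ A ⊕ {v : V // ∀ a, s a ≠ v ∧ t a ≠ v}

def ts (s t : A → V) : TArr s t → V :=
  Sum.elim s (Sum.elim t Subtype.val)
def tt (s t : A → V) : TArr s t → V :=
  Sum.elim t (Sum.elim s Subtype.val)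

variable (K s t) in
noncomputable def tF : TArr s t → TrivExt K V A s t :=
  Sum.elim (fun a => TrivSqZeroExt.inl (ra K s t a))
    (Sum.elim (fun a => TrivSqZeroExt.inr (cf K s t a))
      (fun v => TrivSqZeroExt.inr (chi K s t v.1).toLinearMap))

variable (K s t) in
noncomputable def tE (v : V) : TrivExt K V A s t := TrivSqZeroExt.inl (re K s t v)

variable (K s t) in
/-- The presentation of the trivial extension. -/
noncomputable def phi : PathAlg K V (TArr s t) (ts s t) (tt s t) →ₐ[K] TrivExt K V A s t :=
  pathLift (tE K s t) (tF K s t)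
    (by intro v w
        unfold tE
        rw [← TrivSqZeroExt.inl_mul, re_mul_re]
        split_ifs <;> simp)
    (by unfold tE
        have := map_sum (TrivSqZeroExt.inlHom (RadSqAlg K V A s t)
          (Module.Dual K (RadSqAlg K V A s t))) (re K s t) Finset.univ
        rw [sum_re, map_one] at this
        exact this.symm)
    (by rintro (a | a | v) <;> apply triv_ext <;>
          simp [lsmul_apply, rsmul_apply, tE, tF, ts, re_mul_ra, cf_mul])
    (by rintro (a | a | v) <;> apply triv_ext <;>
          simp [lsmul_apply, rsmul_apply, tE, tF, tt, ra_mul_re, cf_mul])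

theorem phi_vtx (v : V) : phi K s t (vtx _ _ _ _ _ v) = tE K s t v := pathLift_vtx ..
theorem phi_arrow (a : TArr s t) : phi K s t (arrow _ _ _ _ _ a) = tF K s t a := pathLift_arrow ..

theorem chi_tF (v : V) (a : TArr s t) : chi K s t v (tF K s t a).fst = 0 := by
  rcases a with a | a | a <;> simp [tF]

theorem chi_phi (v : V) (x : PathAlg K V (TArr s t) (ts s t) (tt s t)) :
    chi K s t v (phi K s t x).fst = chi K _ _ v (rmk x) := by
  induction x using path_induction with
  | hk k => simp [TrivSqZeroExt.algebraMap_eq_inl']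
  | hv w => rw [phi_vtx]; change _ = chi K _ _ v (re K _ _ w); simp [tE]
  | ha a => rw [phi_arrow, chi_tF]; change _ = chi K _ _ v (ra K _ _ a); simp
  | hadd x y h1 h2 => simp [h1, h2]
  | hmul x y h1 h2 => simp [h1, h2]

theorem cf_phi_aux (α : TArr s t) (l : TrivExt K V A s t →ₗ[K] K)
    (hl : ∀ x y, l (x * y) = chi K s t (ts s t α) x.fst * l y + l x * chi K s t (tt s t α) y.fst)
    (hv : ∀ v, l (tE K s t v) = 0) (h1 : l (tF K s t α) = 1)
    (h0 : ∀ β, β ≠ α → l (tF K s t β) = 0)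
    (x : PathAlg K V (TArr s t) (ts s t) (tt s t)) :
    l (phi K s t x) = cf K _ _ α (rmk x) := by
  classical
  induction x using path_induction with
  | hk k =>
    have e1 : l 1 = 0 := by have := hl 1 1; simpa using this
    have e2 : cf K _ _ α (1 : RadSqAlg K V (TArr s t) (ts s t) (tt s t)) = 0 := by
      have := cf_mul α (1 : RadSqAlg K V (TArr s t) (ts s t) (tt s t)) 1; simpa using this
    rw [AlgHom.commutes, AlgHom.commutes, Algebra.algebraMap_eq_smul_one,
      Algebra.algebraMap_eq_smul_one, map_smul, map_smul, e1, e2]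
  | hv w => rw [phi_vtx, hv]; exact (cf_re _ _).symm
  | ha a =>
    rw [phi_arrow]; refine Eq.trans ?_ (cf_ra _ _).symm
    split_ifs with h
    · rw [h, h1]
    · exact h0 _ h
  | hadd x y h1 h2 => simp only [map_add, h1, h2]
  | hmul x y h1 h2 => rw [map_mul (phi K s t), map_mul rmk, hl, cf_mul, h1, h2, chi_phi, chi_phi]

/-- Evaluation of the second component. -/
noncomputable def evs (z : RadSqAlg K V A s t) : TrivExt K V A s t →ₗ[K] K where
  toFun := fun x => x.snd z
  map_add' := fun x y => rfl
  map_smul' := fun k x => rfl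

@[simp] theorem evs_apply (z : RadSqAlg K V A s t) (x : TrivExt K V A s t) :
    evs z x = x.snd z := rfl

noncomputable def fstL (a : A) : TrivExt K V A s t →ₗ[K] K where
  toFun := fun x => cf K s t a x.fst
  map_add' := fun x y => by simp
  map_smul' := fun k x => by simp

theorem iso_mul [Fintype A] (v : V) (h : ∀ a, s a ≠ v ∧ t a ≠ v) (x : RadSqAlg K V A s t) :
    re K s t v * x = chi K s t v x • re K s t v ∧
    x * re K s t v = chi K s t v x • re K s t v := by
  constructor
  · nth_rewrite 1 [rad_decomp x]
    simp [mul_add, Finset.mul_sum, re_mul_re, re_mul_ra, fun a => (h a).1.symm]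
  · nth_rewrite 1 [rad_decomp x]
    simp [add_mul, Finset.sum_mul, re_mul_re, ra_mul_re, fun a => (h a).2]

theorem phi_ker_le [Fintype A] [Fintype (TArr s t)]
    (x : PathAlg K V (TArr s t) (ts s t) (tt s t)) (hx : phi K s t x = 0) :
    x ∈ JSqIdeal K _ _ (ts s t) (tt s t) := by
  classical
  apply mem_JSq_of_rmk
  have hc : ∀ α, cf K _ _ α (rmk x) = 0 := by
    rintro (a | a | ⟨v, hv⟩)
    · rw [← cf_phi_aux (.inl a) (fstL a) _ _ _ _ x, hx, map_zero]
      · intro x y; simp [fstL, cf_mul, ts, tt]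
      · intro v; simp [fstL, tE]
      · simp [fstL, tF]
      · rintro (b | b | b) hb <;> simp_all [fstL, tF]
    · rw [← cf_phi_aux (.inr (.inl a)) (evs (ra K s t a)) _ _ _ _ x, hx, map_zero]
      · intro x y
        change (x * y).snd _ = _ * y.snd _ + x.snd _ * _
        rw [snd_mul_apply, ra_mul, mul_ra]
        simp [ts, tt, mul_comm]
      · intro v; simp [tE]
      · simp [tF]
      · rintro (b | b | b) hb <;> simp_all [tF]
        grind
    · rw [← cf_phi_aux (.inr (.inr ⟨v, hv⟩)) (evs (re K s t v)) _ _ _ _ x, hx, map_zero]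
      · intro x y
        change (x * y).snd _ = _ * y.snd _ + x.snd _ * _
        rw [snd_mul_apply, (iso_mul v hv _).1, (iso_mul v hv _).2]
        simp [ts, tt, mul_comm]
      · intro v; simp [tE]
      · simp [tF]
      · rintro (b | b | b) hb <;> simp_all [tF]
        grind
  rw [rad_decomp (rmk x)]
  simp [hc, ← chi_phi, hx]

open Classical in
theorem tF_inl_inr [Fintype A] (a b : A) : tF K s t (.inl a) * tF K s t (.inr (.inl b)) =
    if a = b then TrivSqZeroExt.inr (chi K s t (s a)).toLinearMap else 0 := by
  split_ifs with h <;> apply triv_ext <;> simp [lsmul_apply, rsmul_apply, tF, cf_mul, h]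

open Classical in
theorem tF_inr_inl [Fintype A] (a b : A) : tF K s t (.inr (.inl a)) * tF K s t (.inl b) =
    if a = b then TrivSqZeroExt.inr (chi K s t (t a)).toLinearMap else 0 := by
  split_ifs with h <;> apply triv_ext <;> simp [lsmul_apply, rsmul_apply, tF, cf_mul, h, eq_comm]

theorem tF_mul [Fintype A] (x y : TArr s t) (h : tF K s t x * tF K s t y ≠ 0) :
    (∃ a, x = .inl a ∧ y = .inr (.inl a)) ∨ (∃ a, x = .inr (.inl a) ∧ y = .inl a) := by
  classical
  rcases x with a | a | a <;> rcases y with b | b | b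
  · exact absurd (by simp [tF, ← TrivSqZeroExt.inl_mul, ra_mul_ra]) h
  · rw [tF_inl_inr] at h
    by_cases hab : a = b
    · subst hab; simp
    · simp [hab] at h
  · exact absurd (by apply triv_ext <;> simp [tF, lsmul_apply, rsmul_apply]) h
  · rw [tF_inr_inl] at h
    by_cases hab : a = b
    · subst hab; simp
    · simp [hab] at h
  all_goals exact absurd (by apply triv_ext <;> simp [tF, lsmul_apply, rsmul_apply]) h

theorem phi_surj [Fintype A] : Function.Surjective (phi K s t) := by
  classical
  rw [← AlgHom.range_eq_top, eq_top_iff]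
  have hF : ∀ a, tF K s t a ∈ (phi K s t).range := fun a => ⟨_, phi_arrow a⟩
  have hE : ∀ v, tE K s t v ∈ (phi K s t).range := fun a => ⟨_, phi_vtx a⟩
  have hchi : ∀ v, (TrivSqZeroExt.inr (chi K s t v).toLinearMap : TrivExt K V A s t) ∈
      (phi K s t).range := by
    intro v
    by_cases h : ∀ a, s a ≠ v ∧ t a ≠ v
    · exact hF (.inr (.inr ⟨v, h⟩))
    · push Not at h
      obtain ⟨a, ha⟩ := h
      by_cases hs : s a = v
      · have := mul_mem (hF (.inl a)) (hF (.inr (.inl a)))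
        rw [tF_inl_inr, if_pos rfl, hs] at this
        exact this
      · have := mul_mem (hF (.inr (.inl a))) (hF (.inl a))
        rw [tF_inr_inl, if_pos rfl, ha hs] at this
        exact this
  rintro x -
  have key : x = ∑ v, chi K s t v x.fst • tE K s t v + ∑ a, cf K s t a x.fst • tF K s t (.inl a)
      + (∑ v, x.snd (re K s t v) • (TrivSqZeroExt.inr (chi K s t v).toLinearMap : TrivExt K V A s t)
      + ∑ a, x.snd (ra K s t a) • tF K s t (.inr (.inl a))) := by
    apply triv_ext
    · nth_rewrite 1 [rad_decomp x.fst]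
      simp [TrivSqZeroExt.fst_sum, tE, tF]
    · intro z
      nth_rewrite 1 [rad_decomp z]
      simp [TrivSqZeroExt.snd_sum, tE, tF, mul_comm]
  rw [key]
  refine add_mem (add_mem ?_ ?_) (add_mem ?_ ?_) <;> refine sum_mem fun i _ => ?_ <;>
    apply Subalgebra.smul_mem
  exacts [hE _, hF _, hchi _, hF _]

theorem triv_multiserial [Fintype A] : IsSpecialMultiserialAlgebra K (TrivExt K V A s t) := by
  classical
  refine ⟨V, TArr s t, inferInstance, inferInstance, inferInstance, ts s t, tt s t,
    TwoSidedIdeal.ker (phi K s t), ⟨3, by norm_num, ?_, ?_⟩, ?_, ?_⟩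
  · intro l hl
    obtain ⟨a, b, c, rfl⟩ := List.length_eq_three.1 hl
    rw [TwoSidedIdeal.mem_ker]
    simp only [pathElem, List.map_cons, List.map_nil, List.prod_cons, List.prod_nil, mul_one,
      map_mul, phi_arrow]
    rw [← mul_assoc]
    exact triv_cube _ _ _ (fun v => chi_tF v _) (fun v => chi_tF v _) (fun v => chi_tF v _)
  · intro x hx
    rw [TwoSidedIdeal.mem_ker] at hx
    exact phi_ker_le x hx
  · intro a
    simp only [TwoSidedIdeal.mem_ker, map_mul, phi_arrow]
    constructor
    · intro b b' h h'
      have h1 := tF_mul _ _ h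
      have h2 := tF_mul _ _ h'
      grind
    · intro b b' h h'
      have h1 := tF_mul _ _ h
      have h2 := tF_mul _ _ h'
      grind
  · let L := RingQuot.liftAlgHom K (s := fun x y : PathAlg K V (TArr s t) (ts s t) (tt s t) =>
      x - y ∈ TwoSidedIdeal.ker (phi K s t)) ⟨phi K s t, by
        intro x y h
        rw [TwoSidedIdeal.mem_ker, map_sub, sub_eq_zero] at h
        exact h⟩
    have hL : ∀ x, L (RingQuot.mkAlgHom K _ x) = phi K s t x := fun x =>
      RingQuot.liftAlgHom_mkAlgHom_apply _ _ _ x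
    refine ⟨AlgEquiv.ofBijective L ⟨?_, ?_⟩⟩
    · rw [injective_iff_map_eq_zero]
      intro y hy
      obtain ⟨x, rfl⟩ := RingQuot.mkAlgHom_surjective K _ y
      rw [hL] at hy
      rw [RingQuot.mkAlgHom_rel K (y := 0), map_zero]
      rw [sub_zero, TwoSidedIdeal.mem_ker]
      exact hy
    · intro z
      obtain ⟨x, rfl⟩ := phi_surj z
      exact ⟨_, hL x⟩

end TrivialExtension

end Aux

/-- If `A = KQ/J²` is a radical square zero algebra, then the
trivial extension `A ⋉ D(A)` is a symmetric special multiserial algebra whose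
(Jacobson) radical cube is zero, and `A` is a quotient of `A ⋉ D(A)`. -/
theorem trivial_extension_symmetric_special_multiserial
    (K V A : Type) [Field K] [Fintype V] [DecidableEq V] [Fintype A] (s t : A → V) :
    (∃ g : TrivExt K V A s t →ₗ[K] K,
      (∀ x y : TrivExt K V A s t, g (x * y) = g (y * x)) ∧
      (∀ L : Ideal (TrivExt K V A s t), (∀ x ∈ L, g x = 0) → L = ⊥) ∧
      (∀ R : Submodule (TrivExt K V A s t)ᵐᵒᵖ (TrivExt K V A s t),
        (∀ x ∈ R, g x = 0) → R = ⊥)) ∧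
    IsSpecialMultiserialAlgebra K (TrivExt K V A s t) ∧
    (∀ x y z : TrivExt K V A s t,
      x ∈ (⊥ : Ideal (TrivExt K V A s t)).jacobson →
      y ∈ (⊥ : Ideal (TrivExt K V A s t)).jacobson →
      z ∈ (⊥ : Ideal (TrivExt K V A s t)).jacobson → x * y * z = 0) ∧
    (∃ φ : TrivExt K V A s t →ₐ[K] RadSqAlg K V A s t, Function.Surjective φ) := by
  refine ⟨triv_symmetric, triv_multiserial, ?_, ?_⟩
  · intro x y z hx hy hz
    exact triv_cube x y z (chi_of_jacobson x hx) (chi_of_jacobson y hy) (chi_of_jacobson z hz)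
  · exact ⟨TrivSqZeroExt.fstHom K _ _, TrivSqZeroExt.fst_surjective⟩
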